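/- Let p be a prime and Φ : ℤ_p → ℤ_p a non-constant map with Φ(A) = Φ(−A) for all A ∈ ℤ_p. Then the operation (a,x)·(b,y) = (b+x, y + Φ(b−a)) on X = ℤ_p × ℤ_p defines a cycle set that is indecomposable and irretractable and whose permutation group 𝒢(X) is a p-group. Conversely, every indecomposable irretractable cycle set of size p² whose permutation group is a p-group is isomorphic to one of this form. -/

import Mathlib

/-- A (non-degenerate) cycle set: a set with a binary operation satisfying
(C1) `(x·y)·(x·z) = (y·x)·(y·z)`, (C2) each left translation is bijective and
(C3) the square map `x ↦ x·x` is bijective. -/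
structure CycleSet (X : Type*) where
  op : X → X → X
  c1 : ∀ x y z : X, op (op x y) (op x z) = op (op y x) (op y z)
  c2 : ∀ x : X, Function.Bijective (op x)
  c3 : Function.Bijective (fun x : X => op x x)

namespace CycleSet

variable {X Y : Type*}

/-- The permutation `σ_x : y ↦ x·y`. -/
noncomputable def sigma (C : CycleSet X) (x : X) : Equiv.Perm X :=
  Equiv.ofBijective (C.op x) (C.c2 x)

/-- The permutation group `𝒢(X)` generated by all `σ_x`. -/
noncomputable def permGroup (C : CycleSet X) : Subgroup (Equiv.Perm X) :=
  Subgroup.closure (Set.range C.sigma)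

/-- A cycle set is indecomposable if `𝒢(X)` acts transitively on `X`. -/
def Indecomposable (C : CycleSet X) : Prop :=
  ∀ x y : X, ∃ g ∈ C.permGroup, g x = y

/-- A cycle set is irretractable if `σ_x = σ_y` implies `x = y`. -/
def Irretractable (C : CycleSet X) : Prop :=
  ∀ x y : X, C.op x = C.op y → x = y

/-- `f` is an isomorphism of cycle sets from `C` to `D`. -/
def IsIso (C : CycleSet X) (D : CycleSet Y) (f : X → Y) : Prop :=
  Function.Bijective f ∧ ∀ x y : X, f (C.op x y) = D.op (f x) (f y)

/-- Two cycle sets are isomorphic if there is an isomorphism between them. -/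
def Iso (C : CycleSet X) (D : CycleSet Y) : Prop :=
  ∃ f : X → Y, C.IsIso D f

end CycleSet

/-!
The permutation group of the cycle set is a `p`-group acting faithfully and transitively on `p²`
points, so the orbits of a central subgroup of order `p` form a block system. Labelling the blocks
and the points of each block by `ℤ_p` turns every element of the group into a skew translation
`(b, y) ↦ (b + t, y + f b)`; in particular `(a, x) · (b, y) = (b + t a x, y + f a x b)`, and (C1)
becomes a pair of functional equations for `t` and `f`. Functions on `ℤ_p` are polynomials, and
leading coefficients can be compared in these equations; here they appear as constant values of
iterated forward differences. The leading coefficient of `t a` turns out to be independent of `a`,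
and irretractability rules out both degree `0` and degree greater than `1`. Hence `t a x` is
`κ x + g a` with `κ ≠ 0`, and a change of coordinates gives `t a x = x`. The functional equations
then say that `f a x b = Φ (b - a)` with `Φ` even.
-/

open Function

section ForwardDifferences

variable {M N G : Type*} [AddCommMonoid M] [AddCommMonoid N] [AddCommGroup G] (h : M)

theorem fwdDiff_iter_succ_apply (n : ℕ) (f : M → G) (x : M) :
    (fwdDiff h)^[n + 1] f x = (fwdDiff h)^[n] f (x + h) - (fwdDiff h)^[n] f x := by
  rw [iterate_succ_apply', fwdDiff]

theorem fwdDiff_iter_add_apply (n : ℕ) (f g : M → G) (x : M) :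
    (fwdDiff h)^[n] (fun x ↦ f x + g x) x = (fwdDiff h)^[n] f x + (fwdDiff h)^[n] g x :=
  congrFun (fwdDiff_iter_add h f g n) x

theorem fwdDiff_iter_sub_apply (n : ℕ) (f g : M → G) (x : M) :
    (fwdDiff h)^[n] (fun x ↦ f x - g x) x = (fwdDiff h)^[n] f x - (fwdDiff h)^[n] g x := by
  rw [eq_sub_iff_add_eq, ← fwdDiff_iter_add_apply]
  simp only [sub_add_cancel]

theorem fwdDiff_iter_const_mul_apply {R : Type*} [Ring R] (n : ℕ) (r : R) (f : M → R) (x : M) :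
    (fwdDiff h)^[n] (fun x ↦ r * f x) x = r * (fwdDiff h)^[n] f x :=
  congrFun (fwdDiff_iter_const_smul h r f n) x

theorem fwdDiff_iter_zero (n : ℕ) : (fwdDiff h)^[n] (fun _ ↦ 0 : M → G) = fun _ ↦ 0 :=
  iterate_fixed (fwdDiff_const h 0) n

theorem fwdDiff_iter_const {n : ℕ} (hn : 0 < n) (c : G) (x : M) :
    (fwdDiff h)^[n] (fun _ ↦ c : M → G) x = 0 := by
  obtain ⟨n, rfl⟩ := Nat.exists_eq_add_one.mpr hn
  rw [iterate_succ_apply, fwdDiff_const, fwdDiff_iter_zero]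

theorem fwdDiff_iter_affine {R : Type*} [Ring R] {n : ℕ} (hn : 1 < n) (h c d x : R) :
    (fwdDiff h)^[n] (fun x ↦ c * x + d) x = 0 := by
  have slope (x : R) : fwdDiff h (fun x ↦ c * x + d) x = c * h := by
    rw [fwdDiff, mul_add]
    abel
  obtain ⟨n, rfl⟩ := Nat.exists_eq_add_one.mpr (zero_lt_one.trans hn)
  rw [iterate_succ_apply, funext slope, fwdDiff_iter_const h (Nat.lt_of_succ_lt_succ hn)]

theorem fwdDiff_iter_eq_zero_of_le {m n : ℕ} (hmn : m ≤ n) {f : M → G}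
    (hf : ∀ x, (fwdDiff h)^[m] f x = 0) (x : M) : (fwdDiff h)^[n] f x = 0 := by
  obtain ⟨k, rfl⟩ := Nat.exists_eq_add_of_le' hmn
  rw [iterate_add_apply, funext hf, fwdDiff_iter_zero]

theorem fwdDiff_iter_comm (k : N) (m n : ℕ) (f : M → N → G) (x : M) (y : N) :
    (fwdDiff h)^[m] (fun x ↦ (fwdDiff k)^[n] (fun y ↦ f x y) y) x =
      (fwdDiff k)^[n] (fun y ↦ (fwdDiff h)^[m] (fun x ↦ f x y) x) y := by
  induction m generalizing x with
  | zero => rfl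
  | succ m ih => simp only [fwdDiff_iter_succ_apply, ih, fwdDiff_iter_sub_apply]

end ForwardDifferences

section PrimeField

variable {p : ℕ} [Fact p.Prime]

local notation "Δ^[" n "]" => (fwdDiff 1)^[n]

theorem zmod_add_induction {P : ZMod p → Prop} {t a : ZMod p} (ht : t ≠ 0) (ha : P a)
    (step : ∀ x, P x → P (x + t)) (b : ZMod p) : P b := by
  have multiples (n : ℕ) : P (a + n * t) := by
    induction n with
    | zero => simpa using ha
    | succ n ih => simpa [add_mul, add_assoc] using step _ ih
  have hb := multiples ((b - a) / t).val
  rwa [ZMod.natCast_zmod_val, div_mul_cancel₀ _ ht, add_sub_cancel] at hb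

theorem eq_affine_of_add_step {f : ZMod p → ZMod p} {t c : ZMod p} (ht : t ≠ 0)
    (hf : ∀ x, f (x + t) = f x + c) (x : ZMod p) : f x = c / t * x + f 0 := by
  induction x using zmod_add_induction ht (a := 0) with
  | ha => simp
  | step x ih => rw [hf, ih, mul_add, div_mul_cancel₀ c ht]; ring

theorem eq_affine_of_fwdDiff_eq {f : ZMod p → ZMod p} {c : ZMod p} (hf : ∀ x, fwdDiff 1 f x = c)
    (x : ZMod p) : f x = c * x + f 0 := by
  simpa using eq_affine_of_add_step one_ne_zero (fun x ↦ eq_add_of_sub_eq' (hf x)) x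

theorem eq_const_of_fwdDiff_eq_zero {f : ZMod p → ZMod p} (hf : ∀ x, fwdDiff 1 f x = 0)
    (x : ZMod p) : f x = f 0 := by
  simpa using eq_affine_of_fwdDiff_eq hf x

theorem fwdDiff_iter_eq_affine {f : ZMod p → ZMod p} {n : ℕ} {c : ZMod p}
    (hf : ∀ x, Δ^[n + 1] f x = c) (x : ZMod p) :
    Δ^[n] f x = c * x + Δ^[n] f 0 :=
  eq_affine_of_fwdDiff_eq (by simpa only [iterate_succ_apply'] using hf) x

theorem fwdDiff_iter_prime_eq_zero (f : ZMod p → ZMod p) (h x : ZMod p) :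
    (fwdDiff h)^[p] f x = 0 := by
  have middle (k : ℕ) (hk : k ∈ Finset.range p) (hk0 : k ≠ 0) :
      ((-1 : ℤ) ^ (p - k) * p.choose k) • f (x + k • h) = 0 := by
    have : (p.choose k : ZMod p) = 0 := (ZMod.natCast_eq_zero_iff _ _).mpr
      ((Fact.out : p.Prime).dvd_choose_self hk0 (Finset.mem_range.mp hk))
    simp [this]
  rw [fwdDiff_iter_eq_sum_shift, Finset.sum_range_succ,
    Finset.sum_eq_single_of_mem 0 (Finset.mem_range.mpr (NeZero.pos p)) middle]
  simp [ZMod.pow_card, zsmul_eq_mul]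

theorem exists_fwdDiff_iter_eq_const {ι : Type*} {f : ι → ZMod p → ZMod p}
    (hf : ∃ i x, f i x ≠ 0) :
    ∃ (d : ℕ) (e : ι → ZMod p), (∃ i, e i ≠ 0) ∧ ∀ i x, Δ^[d] (f i) x = e i := by
  classical
  have bounded : ∃ n, ∀ i x, Δ^[n] (f i) x = 0 :=
    ⟨p, fun i ↦ fwdDiff_iter_prime_eq_zero (f i) 1⟩
  have pos : Nat.find bounded ≠ 0 := by
    rw [Ne, Nat.find_eq_zero]
    simpa using hf
  obtain ⟨d, hd⟩ := Nat.exists_eq_succ_of_ne_zero pos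
  have vanish := hd ▸ Nat.find_spec bounded
  have const (i : ι) : ∀ x, Δ^[d] (f i) x = Δ^[d] (f i) 0 := by
    simpa using fwdDiff_iter_eq_affine (vanish i)
  obtain ⟨i, x, hix⟩ : ∃ i x, Δ^[d] (f i) x ≠ 0 := by
    simpa using Nat.find_min bounded (m := d) (by lia)
  exact ⟨d, fun i ↦ Δ^[d] (f i) 0, ⟨i, fun h ↦ hix ((const i x).trans h)⟩, const⟩

theorem exists_fwdDiff_iter_succ_eq_const_of_family {ι : Type*} {f : ι → ZMod p → ZMod p}
    (hf : ∃ i x, f i x ≠ f i 0) :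
    ∃ (d : ℕ) (e : ι → ZMod p), (∃ i, e i ≠ 0) ∧ ∀ i x, Δ^[d + 1] (f i) x = e i := by
  have nonzero : ∃ i x, fwdDiff 1 (f i) x ≠ 0 := by
    obtain ⟨i, x, hx⟩ := hf
    by_contra! hzero
    exact hx (eq_const_of_fwdDiff_eq_zero (hzero i) x)
  exact exists_fwdDiff_iter_eq_const nonzero

theorem exists_fwdDiff_iter_succ_eq_const {f : ZMod p → ZMod p} {x : ZMod p} (hf : f x ≠ f 0) :
    ∃ (d : ℕ) (e : ZMod p), e ≠ 0 ∧ ∀ x, Δ^[d + 1] f x = e := by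
  obtain ⟨d, e, ⟨_, he⟩, hd⟩ :=
    exists_fwdDiff_iter_succ_eq_const_of_family (f := fun _ : Unit ↦ f) ⟨(), x, hf⟩
  exact ⟨d, e (), he, hd ()⟩

theorem eq_const_of_fwdDiff_iter_comp_eq_zero {d : ℕ} (hd : 0 < d) {f t : ZMod p → ZMod p}
    {x₀ : ZMod p} (ht : Δ^[d] t x₀ ≠ 0)
    (hf : ∀ s x, Δ^[d] (fun x ↦ f (s + t x)) x = 0) (s : ZMod p) : f s = f 0 := by
  by_contra hs
  obtain ⟨k, e, he, hk⟩ := exists_fwdDiff_iter_succ_eq_const hs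
  have vanish : Δ^[d] (fun x ↦ Δ^[k] (fun s ↦ f (s + t x)) 0) x₀ = 0 := by
    simp only [fwdDiff_iter_comm, hf, fwdDiff_iter_zero]
  -- The `k`-th difference of `f` is affine with slope `e`, so composing it with `t` turns
  -- `vanish` into `e * Δ^d t = 0`.
  simp only [fwdDiff_iter_comp_add, zero_add, fwdDiff_iter_eq_affine hk (t _),
    fwdDiff_iter_add_apply, fwdDiff_iter_const_mul_apply, fwdDiff_iter_const _ hd,
    add_zero] at vanish
  exact mul_ne_zero he ht vanish

theorem exists_row_eq_zero {t : ZMod p} {M : ZMod p → ZMod p → ZMod p}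
    (hM : ∀ a b c, M (a + t) (c + t) = M a c + M a b * M (b + t) (c + t)) :
    ∃ a, ∀ c, M a c = 0 := by
  have diag (a : ZMod p) : M a a = 0 := by
    by_contra ha
    -- The recursion says that `1 / M a a` decreases by `1` along `a ↦ a + t`, so that it
    -- eventually hits `0`.
    have inv_sub (n : ℕ) : M (a + n * t) (a + n * t) * (1 - n * M a a) = M a a := by
      induction n with
      | zero => simp
      | succ n ih =>
        have step := hM (a + n * t) (a + n * t) (a + n * t)
        rw [Nat.cast_succ, add_mul, one_mul, ← add_assoc]
        linear_combination
          (1 - n * M a a) * step + (1 + M (a + n * t + t) (a + n * t + t)) * ih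
    have hit := inv_sub (M a a)⁻¹.val
    rw [ZMod.natCast_zmod_val, inv_mul_cancel₀ ha, sub_self, mul_zero] at hit
    exact ha hit.symm
  have translate (a c : ZMod p) : M (a + t) (c + t) = M a c := by
    rw [hM a a c, diag, zero_mul, add_zero]
  have sq_zero (a b c : ZMod p) : M a b * M b c = 0 := by
    simpa [translate] using hM a b c
  by_contra! hne
  obtain ⟨b, hb⟩ := hne 0
  obtain ⟨c, hc⟩ := hne b
  exact mul_ne_zero hb hc (sq_zero 0 b c)

theorem zmod_eq_zero_of_periodic {α : Type*} {f : ZMod p → α} {t i j : ZMod p} (hij : f i ≠ f j)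
    (ht : Periodic f t) : t = 0 := by
  by_contra ht0
  have const (x : ZMod p) : f x = f i :=
    zmod_add_induction (P := fun x ↦ f x = f i) ht0 rfl (fun x ↦ (ht x).trans) x
  exact hij (const j).symm

theorem zmod_addSubgroup_closure_eq_top {s : Set (ZMod p)} {t : ZMod p} (hs : t ∈ s)
    (ht : t ≠ 0) : AddSubgroup.closure s = ⊤ :=
  (AddSubgroup.eq_top_iff' _).mpr <| zmod_add_induction ht (zero_mem _) fun _ hx ↦
    add_mem hx (AddSubgroup.subset_closure hs)

end PrimeField

section PGroupAction

open MulAction Multiplicative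
open scoped Pointwise

variable {G X : Type*} [Group G]

section CentralSubgroup

theorem normal_of_le_center {K : Subgroup G} (hK : K ≤ Subgroup.center G) : K.Normal :=
  ⟨fun k hk g ↦ by rwa [Subgroup.mem_center_iff.mp (hK hk) g, mul_inv_cancel_right]⟩

variable [MulAction G X]

theorem mem_stabilizer_orbit_iff {K : Subgroup G} [K.Normal] {g : G} {x : X} :
    g ∈ stabilizer G (orbit K x) ↔ g • x ∈ orbit K x :=
  ⟨fun hg ↦ (mem_stabilizer_iff.mp hg).subset (Set.smul_mem_smul_set (mem_orbit_self x)),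
    fun hg ↦ (IsBlock.orbit_of_normal x).smul_eq_of_mem (mem_orbit_self x) hg⟩

theorem map_eq_iff_exists_smul_eq {B D : Type*} [Group B] [Group D] {ζ : B →* G}
    (hcenter : ζ.range ≤ Subgroup.center G) {t : G →* D} {x : X}
    (hker : t.ker = stabilizer G (orbit ζ.range x)) {g h : G} :
    t g = t h ↔ ∃ y, g • x = ζ y • h • x := by
  have := normal_of_le_center hcenter
  have horbit : (h⁻¹ * g) • x ∈ orbit ζ.range x ↔ ∃ y, (h⁻¹ * g) • x = ζ y • x := by
    simp [mem_orbit_iff, Subgroup.smul_def, eq_comm]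
  have hmem : h⁻¹ * g ∈ stabilizer G (orbit ζ.range x) ↔ ∃ y, g • x = ζ y • h • x := by
    rw [mem_stabilizer_orbit_iff, horbit]
    refine exists_congr fun y ↦ ?_
    rw [mul_smul, inv_smul_eq_iff, smul_smul,
      Subgroup.mem_center_iff.mp (hcenter ⟨y, rfl⟩) h, mul_smul]
  rw [← hmem, ← hker, MonoidHom.mem_ker, map_mul, map_inv, inv_mul_eq_one, eq_comm]

variable [FaithfulSMul G X] [IsPretransitive G X]

theorem eq_one_of_mem_center_of_smul_eq {z : G} (hz : z ∈ Subgroup.center G) {x : X}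
    (hx : z • x = x) : z = 1 := by
  refine FaithfulSMul.eq_of_smul_eq_smul (α := X) fun y ↦ ?_
  obtain ⟨g, rfl⟩ := exists_smul_eq G x y
  rw [smul_smul, ← Subgroup.mem_center_iff.mp hz g, mul_smul, hx, one_smul]

theorem smul_injective_of_le_center {K : Subgroup G} (hK : K ≤ Subgroup.center G) (x : X) :
    Injective fun k : K ↦ k • x := fun k l hkl ↦ by
  have hfix : (k⁻¹ * l) • x = x := by
    rw [mul_smul, inv_smul_eq_iff]
    exact hkl.symm
  exact inv_mul_eq_one.mp <| Subtype.ext <|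
    eq_one_of_mem_center_of_smul_eq (hK (k⁻¹ * l).2) hfix

theorem card_mul_index_stabilizer_orbit {K : Subgroup G} (hK : K ≤ Subgroup.center G) (x : X) :
    Nat.card K * (stabilizer G (orbit K x)).index = Nat.card X := by
  have := normal_of_le_center hK
  rw [index_stabilizer, ← Set.ncard_range_of_injective (smul_injective_of_le_center hK x)]
  exact (IsBlock.orbit_of_normal x).ncard_block_mul_ncard_orbit_eq ⟨x, mem_orbit_self x⟩

variable {A B : Type*} [AddCommGroup A] [AddCommGroup B]

-- The second coordinate moves along the orbits of the central subgroup, the first labels them.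
theorem exists_equiv_smul_eq_skewTranslation {ζ : Multiplicative B →* G} (hζ : Injective ζ)
    (hcenter : ζ.range ≤ Subgroup.center G) {t : G →* Multiplicative A} (ht : Surjective t) {x : X}
    (hker : t.ker = stabilizer G (orbit ζ.range x)) :
    ∃ (e : A × B ≃ X) (f : G → A → B),
      ∀ g b y, g • e (b, y) = e (b + (t g).toAdd, y + f g b) := by
  have comm (g : G) (y : Multiplicative B) : g * ζ y = ζ y * g :=
    Subgroup.mem_center_iff.mp (hcenter ⟨y, rfl⟩) g
  choose s hs using ht
  choose k hk using fun g ↦ (map_eq_iff_exists_smul_eq hcenter hker).mp (hs _).symm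
  let ψ (v : A × B) : X := ζ (ofAdd v.2) • s (ofAdd v.1) • x
  have hψ : Bijective ψ := by
    constructor
    · rintro ⟨a, y⟩ ⟨b, z⟩ h
      have hab : a = b := by
        have hst : t (s (ofAdd a)) = t (s (ofAdd b)) := (map_eq_iff_exists_smul_eq hcenter hker).mpr
          ⟨(ofAdd y)⁻¹ * ofAdd z, by rw [map_mul, map_inv, mul_smul, eq_inv_smul_iff]; exact h⟩
        rwa [hs, hs] at hst
      subst hab
      have hyz : (⟨ζ (ofAdd y), _, rfl⟩ : ζ.range) = ⟨ζ (ofAdd z), _, rfl⟩ :=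
        smul_injective_of_le_center hcenter (s (ofAdd a) • x) h
      exact Prod.ext rfl (hζ (congrArg Subtype.val hyz))
    · intro w
      obtain ⟨g, rfl⟩ := exists_smul_eq G x w
      exact ⟨((t g).toAdd, (k g).toAdd), (hk g).symm⟩
  refine ⟨Equiv.ofBijective ψ hψ, fun g b ↦ (k (g * s (ofAdd b))).toAdd, fun g b y ↦ ?_⟩
  calc g • ζ (ofAdd y) • s (ofAdd b) • x
      = ζ (ofAdd y) • (g * s (ofAdd b)) • x := by simp only [smul_smul, ← mul_assoc, comm]
    _ = ζ (ofAdd y) • ζ (k (g * s (ofAdd b))) • s (ofAdd b * t g) • x := by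
      rw [hk, map_mul, hs, mul_comm (t g)]
    _ = ψ (b + (t g).toAdd, y + (k (g * s (ofAdd b))).toAdd) := by
      rw [smul_smul (ζ _) (ζ _), ← map_mul]
      rfl

end CentralSubgroup

variable {p : ℕ} [Fact p.Prime] [Finite G]

theorem exists_injective_zmodHom_range_le_center [Nontrivial G] (hG : IsPGroup p G) :
    ∃ ζ : Multiplicative (ZMod p) →* G, Injective ζ ∧ ζ.range ≤ Subgroup.center G := by
  have : Nontrivial (Subgroup.center G) := hG.center_nontrivial
  obtain ⟨n, hn, hcard⟩ := (hG.to_subgroup (Subgroup.center G)).nontrivial_iff_card.mp this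
  obtain ⟨z, hz⟩ := exists_prime_orderOf_dvd_card' p (hcard ▸ dvd_pow_self p hn.ne')
  have e : Multiplicative (ZMod p) ≃* Subgroup.zpowers z :=
    mulEquivOfPrimeCardEq (p := p) (by simp) (by rw [Nat.card_zpowers, hz])
  refine ⟨(Subgroup.center G).subtype.comp ((Subgroup.zpowers z).subtype.comp e.toMonoidHom),
    Subtype.val_injective.comp (Subtype.val_injective.comp e.injective), ?_⟩
  rintro _ ⟨y, rfl⟩
  exact (e y).1.2

theorem exists_surjective_zmodHom_ker_eq (hG : IsPGroup p G) {H : Subgroup G} (hH : H.index = p) :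
    ∃ t : G →* Multiplicative (ZMod p), Surjective t ∧ t.ker = H := by
  have hp : p.Prime := Fact.out
  have hnormal : H.Normal := by
    obtain ⟨n, hn⟩ := IsPGroup.iff_card.mp hG
    have hn0 : n ≠ 0 := by
      rintro rfl
      exact hp.not_dvd_one (by simpa [hn, hH] using H.index_dvd_card)
    exact Subgroup.normal_of_index_eq_minFac_card (by rw [hn, hp.pow_minFac hn0, hH])
  have e : G ⧸ H ≃* Multiplicative (ZMod p) :=
    mulEquivOfPrimeCardEq (p := p) (by rw [← hH]; rfl) (by simp)
  exact ⟨e.toMonoidHom.comp (QuotientGroup.mk' H),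
    e.surjective.comp (QuotientGroup.mk'_surjective H), by
      exact (MonoidHom.ker_mulEquiv_comp _ e).trans (QuotientGroup.ker_mk' H)⟩

theorem exists_equiv_smul_eq_skewTranslation_zmod [MulAction G X] [FaithfulSMul G X]
    [IsPretransitive G X] (hG : IsPGroup p G) (hX : Nat.card X = p ^ 2) :
    ∃ (e : ZMod p × ZMod p ≃ X) (t : G → ZMod p) (f : G → ZMod p → ZMod p),
      ∀ g b y, g • e (b, y) = e (b + t g, y + f g b) := by
  have hp : p.Prime := Fact.out
  have : Finite X := Nat.finite_of_card_ne_zero (hX ▸ pow_ne_zero 2 hp.ne_zero)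
  have : Nontrivial X := by
    rw [← Finite.one_lt_card_iff_nontrivial, hX]
    exact Nat.one_lt_pow two_ne_zero hp.one_lt
  obtain ⟨x, y, hxy⟩ := exists_pair_ne X
  have : Nontrivial G := by
    obtain ⟨g, rfl⟩ := exists_smul_eq G x y
    exact ⟨g, 1, by rintro rfl; exact hxy (one_smul G x).symm⟩
  obtain ⟨ζ, hζ, hcenter⟩ := exists_injective_zmodHom_range_le_center hG
  have hindex : (stabilizer G (orbit ζ.range x)).index = p := by
    have hcard : Nat.card ζ.range = p := by
      simpa using (Nat.card_congr (MonoidHom.ofInjective hζ).toEquiv).symm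
    exact Nat.eq_of_mul_eq_mul_left hp.pos (by
      rw [← sq, ← hX, ← card_mul_index_stabilizer_orbit hcenter x, hcard])
  obtain ⟨t, ht, hker⟩ := exists_surjective_zmodHom_ker_eq hG hindex
  obtain ⟨e, f, he⟩ := exists_equiv_smul_eq_skewTranslation hζ hcenter ht hker
  exact ⟨e, fun g ↦ (t g).toAdd, f, he⟩

end PGroupAction

namespace CycleSet

section Invariant

variable {X : Type*} {C : CycleSet X}

theorem indecomposable_iff_forall_invariant :
    C.Indecomposable ↔
      ∀ s : Set X, s.Nonempty → (∀ x y, C.op x y ∈ s ↔ y ∈ s) → s = Set.univ := by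
  constructor
  · rintro hC s ⟨x, hx⟩ hs
    have invariant {g : Equiv.Perm X} (hg : g ∈ C.permGroup) : ∀ y, g y ∈ s ↔ y ∈ s := by
      induction hg using Subgroup.closure_induction with
      | mem g hg =>
        obtain ⟨x, rfl⟩ := hg
        exact hs x
      | one => exact fun _ ↦ Iff.rfl
      | mul g h _ _ ihg ihh => exact fun y ↦ (ihg (h y)).trans (ihh y)
      | inv g _ ih => exact fun y ↦ by simpa using (ih (g⁻¹ y)).symm
    refine Set.eq_univ_of_forall fun y ↦ ?_
    obtain ⟨g, hg, rfl⟩ := hC x y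
    exact (invariant hg x).mpr hx
  · intro hC x y
    suffices horbit : {z | ∃ g ∈ C.permGroup, g x = z} = Set.univ from
      Set.eq_univ_iff_forall.mp horbit y
    refine hC _ ⟨x, 1, one_mem _, rfl⟩ fun u v ↦ ?_
    have hu : C.sigma u ∈ C.permGroup := Subgroup.subset_closure ⟨u, rfl⟩
    constructor
    · rintro ⟨g, hg, hgx⟩
      exact ⟨(C.sigma u)⁻¹ * g, mul_mem (inv_mem hu) hg, by
        rw [Equiv.Perm.mul_apply, hgx]; exact (C.sigma u).symm_apply_apply v⟩
    · rintro ⟨g, hg, rfl⟩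
      exact ⟨C.sigma u * g, mul_mem hu hg, rfl⟩

end Invariant

section OfEven

variable {A : Type*} [AddCommGroup A]

/-- The cycle set on `A × A` with `(a, x) · (b, y) = (b + x, y + Φ (b - a))`. For `A = ℤ_p` and
`Φ` non-constant these are the models that the theorem classifies. -/
def ofEven (Φ : A → A) (hΦ : Function.Even Φ) : CycleSet (A × A) where
  op u v := (v.1 + u.2, v.2 + Φ (v.1 - u.1))
  c1 := fun (a, x) (b, y) (c, z) ↦ by
    have hab : Φ (b - a) = Φ (a - b) := by rw [← hΦ, neg_sub]
    ext
    · simp only [hab]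
      abel
    · have h₁ : c + x - (b + x) = c - b := by abel
      have h₂ : c + y - (a + y) = c - a := by abel
      simp only [h₁, h₂]
      abel
  c2 := fun (a, x) ↦ bijective_iff_has_inverse.mpr
    ⟨fun v ↦ (v.1 - x, v.2 - Φ (v.1 - x - a)), fun v ↦ by simp, fun v ↦ by simp⟩
  c3 := bijective_iff_has_inverse.mpr
    ⟨fun v ↦ (v.1 - (v.2 - Φ 0), v.2 - Φ 0), fun v ↦ by simp, fun v ↦ by simp⟩

variable {Φ : A → A} {hΦ : Function.Even Φ}

theorem ofEven_op (u v : A × A) :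
    (ofEven Φ hΦ).op u v = (v.1 + u.2, v.2 + Φ (v.1 - u.1)) := rfl

theorem ofEven_indecomposable (hgen : AddSubgroup.closure (Set.range Φ) = ⊤) :
    (ofEven Φ hΦ).Indecomposable := by
  refine indecomposable_iff_forall_invariant.mpr fun s ⟨u, hu⟩ hs ↦ ?_
  have second (b y t : A) : (b, y + t) ∈ s ↔ (b, y) ∈ s := by
    have ht : t ∈ AddSubgroup.closure (Set.range Φ) := hgen ▸ AddSubgroup.mem_top t
    induction ht using AddSubgroup.closure_induction generalizing y with
    | mem t ht =>
      obtain ⟨i, rfl⟩ := ht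
      simpa [ofEven_op] using hs (b - i, 0) (b, y)
    | zero => rw [add_zero]
    | add t t' _ _ iht iht' => exact add_assoc y t t' ▸ (iht' _).trans (iht y)
    | neg t _ ih => simpa using (ih (y + -t)).symm
  have first (b y x : A) : (b + x, y) ∈ s ↔ (b, y) ∈ s := by
    rw [← second (b + x) y (Φ (b - 0))]
    exact hs (0, x) (b, y)
  refine Set.eq_univ_of_forall fun v ↦ ?_
  rwa [← Prod.mk.eta (p := v), ← add_sub_cancel u.1 v.1, ← add_sub_cancel u.2 v.2, first, second]

theorem ofEven_irretractable (hper : ∀ t, Periodic Φ t → t = 0) :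
    (ofEven Φ hΦ).Irretractable := by
  rintro ⟨a, x⟩ ⟨b, y⟩ h
  have hop (c : A) : c + x = c + y ∧ Φ (c - a) = Φ (c - b) := by
    simpa [ofEven_op] using congrFun h (c, 0)
  have hab : a - b = 0 := hper _ fun c ↦ by
    simpa [add_sub_assoc] using ((hop (c + a)).2).symm
  rw [sub_eq_zero.mp hab, add_left_cancel (hop 0).1]

variable (A) in
/-- The group of permutations `(b, y) ↦ (b + t, y + f b)` of `A × A`. It contains the permutation
group of every `ofEven Φ`, and has `p`-power torsion as soon as `A` has. -/
def skewTranslations : Subgroup (Equiv.Perm (A × A)) where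
  carrier := {g | ∃ (t : A) (f : A → A), ∀ b y, g (b, y) = (b + t, y + f b)}
  one_mem' := ⟨0, 0, by simp⟩
  mul_mem' := by
    rintro g h ⟨t, f, hg⟩ ⟨t', f', hh⟩
    exact ⟨t' + t, fun b ↦ f' b + f (b + t'), fun b y ↦ by simp [hg, hh, add_assoc]⟩
  inv_mem' := by
    rintro g ⟨t, f, hg⟩
    exact ⟨-t, fun b ↦ -f (b - t), fun b y ↦ by
      rw [Equiv.Perm.inv_eq_iff_eq, hg]
      simp [sub_eq_add_neg]⟩

theorem isPGroup_skewTranslations {p : ℕ} (hA : ∀ a : A, p • a = 0) :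
    IsPGroup p (skewTranslations A) := by
  rintro ⟨g, t, f, hg⟩
  have fst_pow (n : ℕ) (u : A × A) : ((g ^ n) u).1 = u.1 + n • t := by
    induction n with
    | zero => simp
    | succ n ih => simp [pow_succ', hg, ih, succ_nsmul, add_assoc]
  have snd_pow (n : ℕ) (b : A) : ∃ c, ∀ y, ((g ^ n) (b, y)).2 = y + c := by
    induction n with
    | zero => exact ⟨0, by simp⟩
    | succ n ih =>
      obtain ⟨c, hc⟩ := ih
      exact ⟨c + f (b + n • t), fun y ↦ by simp [pow_succ', hg, hc, fst_pow, add_assoc]⟩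
  have pow_prime (b : A) : ∃ c, ∀ y, (g ^ p) (b, y) = (b, y + c) := by
    obtain ⟨c, hc⟩ := snd_pow p b
    exact ⟨c, fun y ↦ Prod.ext (by simp [fst_pow, hA]) (hc y)⟩
  refine ⟨2, Subtype.ext <| Equiv.ext fun (b, y) ↦ ?_⟩
  obtain ⟨c, hc⟩ := pow_prime b
  have pow_pow (n : ℕ) : ((g ^ p) ^ n) (b, y) = (b, y + n • c) := by
    induction n with
    | zero => simp
    | succ n ih => rw [pow_succ', Equiv.Perm.mul_apply, ih, hc, succ_nsmul, add_assoc]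
  simpa [hA, pow_two, pow_mul] using pow_pow p

theorem ofEven_permGroup_le : (ofEven Φ hΦ).permGroup ≤ skewTranslations A := by
  refine (Subgroup.closure_le _).mpr ?_
  rintro _ ⟨u, rfl⟩
  exact ⟨u.2, fun b ↦ Φ (b - u.1), fun _ _ ↦ rfl⟩

theorem ofEven_isPGroup_permGroup {p : ℕ} (hA : ∀ a : A, p • a = 0) :
    IsPGroup p (ofEven Φ hΦ).permGroup :=
  (isPGroup_skewTranslations hA).to_le ofEven_permGroup_le

end OfEven

/-- Coordinates on a cycle set in which every `σ_u` is a skew translation of `A × A`: the point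
with coordinates `(a, x)` acts by `(b, y) ↦ (b + t a x, y + f a x b)`. -/
structure SkewChart {X : Type*} (C : CycleSet X) (A : Type*) [AddCommGroup A] where
  toEquiv : A × A ≃ X
  t : A → A → A
  f : A → A → A → A
  op_apply : ∀ a x b y,
    C.op (toEquiv (a, x)) (toEquiv (b, y)) = toEquiv (b + t a x, y + f a x b)

namespace SkewChart

variable {X A : Type*} {C : CycleSet X} [AddCommGroup A]

section

variable (S : C.SkewChart A)

theorem t_comm (a b x y : A) :
    S.t (b + S.t a x) (y + S.f a x b) + S.t a x = S.t (a + S.t b y) (x + S.f b y a) + S.t b y := by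
  have h := C.c1 (S.toEquiv (a, x)) (S.toEquiv (b, y)) (S.toEquiv (0, 0))
  simp only [op_apply, EmbeddingLike.apply_eq_iff_eq, Prod.mk.injEq] at h
  simpa only [zero_add, add_comm] using h.1

theorem f_comm (a b c x y : A) :
    S.f (b + S.t a x) (y + S.f a x b) (c + S.t a x) + S.f a x c =
      S.f (a + S.t b y) (x + S.f b y a) (c + S.t b y) + S.f b y c := by
  have h := C.c1 (S.toEquiv (a, x)) (S.toEquiv (b, y)) (S.toEquiv (c, 0))
  simp only [op_apply, EmbeddingLike.apply_eq_iff_eq, Prod.mk.injEq] at h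
  simpa only [zero_add, add_comm] using h.2

theorem eq_of_irretractable (hI : C.Irretractable) {a b x y : A} (ht : S.t a x = S.t b y)
    (hf : ∀ c, S.f a x c = S.f b y c) : a = b ∧ x = y := by
  have hσ : C.op (S.toEquiv (a, x)) = C.op (S.toEquiv (b, y)) := by
    refine funext (S.toEquiv.surjective.forall.mpr fun (c, z) ↦ ?_)
    rw [op_apply, op_apply, ht, hf]
  simpa using hI _ _ hσ

theorem exists_t_ne_zero [Nontrivial A] (hC : C.Indecomposable) : ∃ a x, S.t a x ≠ 0 := by
  by_contra! ht
  obtain ⟨a, ha⟩ := exists_ne (0 : A)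
  have huniv := indecomposable_iff_forall_invariant.mp hC {u | (S.toEquiv.symm u).1 = 0}
    ⟨S.toEquiv (0, 0), by simp⟩
      (S.toEquiv.surjective.forall₂.mpr fun (b, x) (c, y) ↦ by simp [op_apply, ht])
  exact ha (by simpa using Set.eq_univ_iff_forall.mp huniv (S.toEquiv (a, 0)))

/-- The chart obtained from `S` by the change of coordinates `(a, x) ↦ (a, u x + g a)`. -/
@[simps]
def reparam (u : A ≃+ A) (g : A → A) : C.SkewChart A where
  toEquiv :=
    { toFun v := S.toEquiv (v.1, u.symm (v.2 - g v.1))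
      invFun w := ((S.toEquiv.symm w).1, u (S.toEquiv.symm w).2 + g (S.toEquiv.symm w).1)
      left_inv v := by simp
      right_inv w := by simp }
  t a x := S.t a (u.symm (x - g a))
  f a x b := u (S.f a (u.symm (x - g a)) b) + g (b + S.t a (u.symm (x - g a))) - g b
  op_apply a x b y := by
    simp only [Equiv.coe_fn_mk, op_apply, EmbeddingLike.apply_eq_iff_eq, Prod.mk.injEq, true_and,
      AddEquiv.eq_symm_apply, map_add, AddEquiv.apply_symm_apply]
    abel

end

theorem exists_eq_of_t_eq (S : C.SkewChart A) (hS : ∀ a x, S.t a x = x) :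
    ∃ Φ : A → A, Function.Even Φ ∧ ∀ a x b, S.f a x b = Φ (b - a) := by
  have symm (a b x y : A) : S.f a x b = S.f b y a := by
    have h := S.t_comm a b x y
    simp only [hS] at h
    rw [add_right_comm, add_right_comm x, add_comm y] at h
    exact add_left_cancel h
  have indep (a x b : A) : S.f a x b = S.f a 0 b := (symm a b x 0).trans (symm b a 0 0)
  have translate (a b x : A) : S.f (a + x) 0 (b + x) = S.f a 0 b := by
    have h := S.f_comm 0 a b x 0
    simp only [hS, add_zero, indep (a + x), indep 0] at h
    exact add_left_cancel ((add_comm _ _).trans h)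
  refine ⟨S.f 0 0, fun a ↦ ?_, fun a x b ↦ ?_⟩
  · rw [← translate 0 (-a) a, neg_add_cancel, zero_add, symm]
  · rw [← translate 0 (b - a) a, zero_add, sub_add_cancel, indep]

theorem iso_ofEven (S : C.SkewChart A) {Φ : A → A} (hΦ : Function.Even Φ)
    (ht : ∀ a x, S.t a x = x) (hf : ∀ a x b, S.f a x b = Φ (b - a)) : C.Iso (ofEven Φ hΦ) :=
  ⟨S.toEquiv.symm, S.toEquiv.symm.bijective, S.toEquiv.surjective.forall₂.mpr
    fun (a, x) (b, y) ↦ by simp [op_apply, ofEven_op, ht, hf]⟩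

theorem exists_iso_ofEven [Nontrivial A] (hI : C.Irretractable) (S : C.SkewChart A)
    (hS : ∀ a x, S.t a x = x) :
    ∃ (Φ : A → A) (hΦ : Function.Even Φ), (∃ i j, Φ i ≠ Φ j) ∧ C.Iso (ofEven Φ hΦ) := by
  obtain ⟨Φ, hΦ, hf⟩ := S.exists_eq_of_t_eq hS
  refine ⟨Φ, hΦ, ?_, S.iso_ofEven hΦ hS hf⟩
  by_contra! hconst
  obtain ⟨a, ha⟩ := exists_ne (0 : A)
  exact ha (S.eq_of_irretractable hI (x := 0) (y := 0) ((hS a 0).trans (hS 0 0).symm) fun c ↦ by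
    rw [hf, hf, hconst]).1

section Differences

variable {R : Type*} [CommRing R] (S : C.SkewChart R)

local notation "Δ^[" n "]" => (fwdDiff 1)^[n]

theorem fwdDiff_iter_f_add (n : ℕ) (a b x y : R) :
    Δ^[n] (fun y ↦ S.f a (y + x) b) y = Δ^[n] (fun y ↦ S.f a y b) (y + x) :=
  fwdDiff_iter_comp_add 1 (fun y ↦ S.f a y b) x n y

section LeadingCoefficient

variable {d : ℕ} {E : R → R} (hE : ∀ a x, Δ^[d] (S.t a) x = E a)
include hE

theorem fwdDiff_iter_comp_t_comm (a b x y : R) :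
    Δ^[d] (fun x ↦ E (b + S.t a x) - E b) x = Δ^[d] (fun y ↦ E (a + S.t b y) - E a) y := by
  have lead (a b x y : R) :
      Δ^[d] (fun y ↦ S.t (b + S.t a x) (y + S.f a x b) - S.t b y) y = E (b + S.t a x) - E b := by
    rw [fwdDiff_iter_sub_apply, fwdDiff_iter_comp_add, hE, hE]
  have comm (x y : R) : S.t (b + S.t a x) (y + S.f a x b) - S.t b y =
      S.t (a + S.t b y) (x + S.f b y a) - S.t a x := by
    linear_combination S.t_comm a b x y
  simp only [← lead a b _ y, comm, fwdDiff_iter_comm, lead b a _ x]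

end LeadingCoefficient

section ConstantFirstShift

variable {k : ℕ} {τ : R} {e : R → R → R} (ht : ∀ a x, S.t a x = τ) (hk : 0 < k)
  (he : ∀ a b x, Δ^[k] (fun x ↦ S.f a x b) x = e a b)
include ht hk he

theorem fwdDiff_iter_f_comp (a b c x y : R) :
    Δ^[k] (fun y ↦ S.f (a + τ) (x + S.f b y a) (c + τ)) y = e (b + τ) (c + τ) - e b c := by
  have comm (y : R) : S.f (a + τ) (x + S.f b y a) (c + τ) =
      S.f (b + τ) (y + S.f a x b) (c + τ) + S.f a x c - S.f b y c := by
    have h := S.f_comm a b c x y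
    simp only [ht] at h
    linear_combination -h
  simp only [comm, fwdDiff_iter_sub_apply, fwdDiff_iter_add_apply, fwdDiff_iter_const _ hk, he,
    fwdDiff_iter_f_add, add_zero]

theorem leadingCoeff_f_add {a c m n : R} (hm : ∀ x, S.f (a + τ) x (c + τ) = m * x + n)
    (b : R) : e (b + τ) (c + τ) = e b c + m * e b a := by
  have h := S.fwdDiff_iter_f_comp ht hk he a b c 0 0
  simp only [hm, zero_add, fwdDiff_iter_add_apply, fwdDiff_iter_const_mul_apply, he,
    fwdDiff_iter_const _ hk, add_zero] at h
  linear_combination -h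

end ConstantFirstShift

section LinearDifference

variable {n : ℕ} {κ : R} (ht : ∀ a x, Δ^[n] (S.t a) x = κ * x)
include ht

theorem fwdDiff_iter_succ_t (a x : R) : Δ^[n + 1] (S.t a) x = κ := by
  rw [fwdDiff_iter_succ_apply, ht, ht]
  ring

theorem fwdDiff_iter_t_comp_eq_zero (a b x y : R) :
    Δ^[n + 1] (fun x ↦ S.t (b + S.t a x) (y + S.f a x b)) x = 0 := by
  have comm (x : R) : S.t (b + S.t a x) (y + S.f a x b) =
      S.t (a + S.t b y) (x + S.f b y a) + S.t b y - S.t a x := by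
    linear_combination S.t_comm a b x y
  simp only [comm, fwdDiff_iter_sub_apply, fwdDiff_iter_add_apply, fwdDiff_iter_comp_add,
    S.fwdDiff_iter_succ_t ht, fwdDiff_iter_const _ n.succ_pos, add_zero, sub_self]

end LinearDifference

section AffineDifference

variable {j : ℕ} {φ ψ : R → R → R} (hf : ∀ a b x, Δ^[j] (fun x ↦ S.f a x b) x = φ a b * x + ψ a b)
include hf

theorem fwdDiff_iter_succ_f (a b x : R) : Δ^[j + 1] (fun x ↦ S.f a x b) x = φ a b := by
  rw [fwdDiff_iter_succ_apply, hf, hf]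
  ring

theorem fwdDiff_iter_f_comp_eq_zero (a b c x y : R) :
    Δ^[j + 2] (fun x ↦ S.f (b + S.t a x) (y + S.f a x b) (c + S.t a x)) x = 0 := by
  have comm (x : R) : S.f (b + S.t a x) (y + S.f a x b) (c + S.t a x) =
      S.f (a + S.t b y) (x + S.f b y a) (c + S.t b y) + S.f b y c - S.f a x c := by
    linear_combination S.f_comm a b c x y
  have top (a c x : R) : Δ^[j + 2] (fun x ↦ S.f a x c) x = 0 := by
    rw [fwdDiff_iter_succ_apply, S.fwdDiff_iter_succ_f hf, S.fwdDiff_iter_succ_f hf, sub_self]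
  simp only [comm, fwdDiff_iter_sub_apply, fwdDiff_iter_add_apply, top, fwdDiff_iter_f_add,
    fwdDiff_iter_const _ (Nat.succ_pos _), add_zero, sub_self]

end AffineDifference

end Differences

section PrimeField

variable {p : ℕ} [Fact p.Prime] (S : C.SkewChart (ZMod p))

local notation "Δ^[" n "]" => (fwdDiff 1)^[n]

theorem eq_const_of_fwdDiff_iter_t_eq {d : ℕ} {E : ZMod p → ZMod p}
    (hE : ∀ a x, Δ^[d] (S.t a) x = E a) (a : ZMod p) : E a = E 0 := by
  by_contra ha
  obtain ⟨k, e, he, hk⟩ := exists_fwdDiff_iter_succ_eq_const ha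
  have diff_b (a b x : ZMod p) :
      Δ^[k] (fun b ↦ Δ^[d] (fun x ↦ E (b + S.t a x) - E b) x) b = e * E a := by
    have affine (x : ZMod p) : Δ^[k] (fun b ↦ E (b + S.t a x) - E b) b = e * S.t a x := by
      rw [fwdDiff_iter_sub_apply, fwdDiff_iter_comp_add, fwdDiff_iter_eq_affine hk (b + _),
        fwdDiff_iter_eq_affine hk b]
      ring
    rw [fwdDiff_iter_comm]
    simp only [affine, fwdDiff_iter_const_mul_apply, hE]
  have diff_a (a b x : ZMod p) :
      Δ^[k + 1] (fun a ↦ Δ^[d] (fun x ↦ E (b + S.t a x) - E b) x) a = 0 := by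
    simp only [S.fwdDiff_iter_comp_t_comm hE _ b x 0, fwdDiff_iter_succ_apply, diff_b, sub_self]
  have mixed : e * e = Δ^[k] (fun b ↦ Δ^[k + 1] (fun a ↦
      Δ^[d] (fun x ↦ E (b + S.t a x) - E b) 0) 0) 0 := by
    rw [fwdDiff_iter_comm]
    simp only [diff_b, fwdDiff_iter_const_mul_apply, hk]
  simp only [diff_a, fwdDiff_iter_zero, mul_self_eq_zero] at mixed
  exact he mixed

theorem f_eq_affine_of_ne_zero {k : ℕ} {τ : ZMod p} {e : ZMod p → ZMod p → ZMod p}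
    (ht : ∀ a x, S.t a x = τ) (hk : 0 < k) (he : ∀ a b x, Δ^[k] (fun x ↦ S.f a x b) x = e a b)
    {a b : ZMod p} (hba : e b a ≠ 0) (c x : ZMod p) :
    S.f (a + τ) x c = fwdDiff 1 (fun x ↦ S.f (a + τ) x c) 0 * x + S.f (a + τ) 0 c := by
  refine eq_affine_of_fwdDiff_eq (f := fun x ↦ S.f (a + τ) x c) (fun x ↦ ?_) x
  refine eq_const_of_fwdDiff_iter_comp_eq_zero hk (x₀ := 0) (t := fun y ↦ S.f b y a)
    (f := fwdDiff 1 fun x ↦ S.f (a + τ) x c) (by rwa [he]) (fun s y ↦ ?_) x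
  have const (x : ZMod p) := S.fwdDiff_iter_f_comp ht hk he a b (c - τ) x y
  simp only [sub_add_cancel] at const
  simp only [fwdDiff, fwdDiff_iter_sub_apply, add_right_comm s, const, sub_self]

theorem exists_f_ne_of_t_eq_const (hI : C.Irretractable) {τ : ZMod p}
    (ht : ∀ a x, S.t a x = τ) (b : ZMod p) : ∃ c x, S.f b x c ≠ S.f b 0 c := by
  by_contra! hconst
  exact one_ne_zero (S.eq_of_irretractable hI ((ht b 1).trans (ht b 0).symm) fun c ↦ hconst c 1).2

theorem eq_zero_of_t_eq_const (hI : C.Irretractable) {τ : ZMod p} (ht : ∀ a x, S.t a x = τ) :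
    τ = 0 := by
  by_contra hτ
  have dependent := S.exists_f_ne_of_t_eq_const hI ht
  obtain ⟨k, e, ⟨⟨b, a⟩, hba⟩, hk⟩ :=
    exists_fwdDiff_iter_succ_eq_const_of_family (f := fun (q : ZMod p × ZMod p) x ↦ S.f q.1 x q.2)
      (let ⟨c, hc⟩ := dependent 0; ⟨(0, c), hc⟩)
  replace hk (b c x : ZMod p) : Δ^[k + 1] (fun x ↦ S.f b x c) x = e (b, c) := hk (b, c) x
  obtain rfl | hk1 : k = 0 ∨ 1 < k + 1 := by lia
  · have affine (b c x : ZMod p) : S.f b x c = e (b, c) * x + S.f b 0 c :=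
      fwdDiff_iter_eq_affine (n := 0) (hk b c) x
    obtain ⟨b, hb⟩ := exists_row_eq_zero (t := τ) (M := fun b c ↦ e (b, c)) fun b a c ↦
      (S.leadingCoeff_f_add ht one_pos hk (affine _ _) b).trans (by rw [mul_comm])
    obtain ⟨c, x, hx⟩ := dependent b
    rw [affine b c x, hb, zero_mul, zero_add] at hx
    exact hx rfl
  · have affine := S.f_eq_affine_of_ne_zero ht k.succ_pos hk hba
    have recursion (c : ZMod p) := S.leadingCoeff_f_add ht k.succ_pos hk (affine (c + τ))
    have row_zero (c : ZMod p) : e (a + τ, c) = 0 := by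
      rw [← hk _ _ 0, funext (affine c), fwdDiff_iter_affine hk1]
    have vanish (b : ZMod p) : ∀ c, e (b, c) = 0 := by
      induction b using zmod_add_induction hτ (a := a + τ) with
      | ha => exact row_zero
      | step b ih =>
        intro c
        rw [← sub_add_cancel c τ, recursion, ih, ih, mul_zero, add_zero]
    exact hba (vanish b a)

section LinearLeadingDifference

variable {n : ℕ} {κ : ZMod p} (hκ : κ ≠ 0) (ht : ∀ a x, Δ^[n] (S.t a) x = κ * x)
include hκ ht

theorem fwdDiff_iter_f_eq_zero (a b x : ZMod p) :
    Δ^[n + 1] (fun x ↦ S.f a x b) x = 0 := by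
  have mixed : Δ^[n + 1] (fun x ↦ Δ^[n] (fun y ↦ S.t (b + S.t a x) (y + S.f a x b)) 0) x = 0 := by
    rw [fwdDiff_iter_comm]
    simp only [S.fwdDiff_iter_t_comp_eq_zero ht, fwdDiff_iter_zero]
  simp only [fwdDiff_iter_comp_add, ht, zero_add, fwdDiff_iter_const_mul_apply] at mixed
  exact (mul_eq_zero.mp mixed).resolve_left hκ

theorem eq_const_of_fwdDiff_iter_comp_t_eq_zero {k : ℕ} (hk : k ≤ n) (a : ZMod p)
    {g : ZMod p → ZMod p} (hg : ∀ s x, Δ^[k + 1] (fun x ↦ g (s + S.t a x)) x = 0) (s : ZMod p) :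
    g s = g 0 :=
  eq_const_of_fwdDiff_iter_comp_eq_zero (x₀ := 0) n.succ_pos
    (by rwa [S.fwdDiff_iter_succ_t ht]) (fun s ↦
      fwdDiff_iter_eq_zero_of_le 1 (Nat.succ_le_succ hk) (hg s)) s

section AffineDifference

variable {j : ℕ} {φ ψ : ZMod p → ZMod p → ZMod p} (hj : j < n)
  (hf : ∀ a b x, Δ^[j] (fun x ↦ S.f a x b) x = φ a b * x + ψ a b)
include hj hf

theorem leadingCoeff_f_translate (b c s : ZMod p) : φ (b + s) (c + s) = φ b c := by
  suffices h : ∀ s, φ (b + s) (c + s) = φ (b + 0) (c + 0) by simpa only [add_zero] using h s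
  refine S.eq_const_of_fwdDiff_iter_comp_t_eq_zero (g := fun s ↦ φ (b + s) (c + s)) hκ ht hj 0
    fun s x ↦ ?_
  have mixed : Δ^[j + 2] (fun x ↦ Δ^[j + 1] (fun y ↦
      S.f (b + s + S.t 0 x) (y + S.f 0 x (b + s)) (c + s + S.t 0 x)) 0) x = 0 := by
    rw [fwdDiff_iter_comm]
    simp only [S.fwdDiff_iter_f_comp_eq_zero hf, fwdDiff_iter_zero]
  simpa only [fwdDiff_iter_f_add, S.fwdDiff_iter_succ_f hf, add_assoc] using mixed

theorem subleadingCoeff_f_translate (b c s : ZMod p) : ψ (b + s) (c + s) = ψ b c := by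
  suffices h : ∀ s, ψ (b + s) (c + s) = ψ (b + 0) (c + 0) by simpa only [add_zero] using h s
  refine S.eq_const_of_fwdDiff_iter_comp_t_eq_zero (g := fun s ↦ ψ (b + s) (c + s)) hκ ht hj 0
    fun s x ↦ ?_
  have mixed : Δ^[j + 2] (fun x ↦ Δ^[j] (fun y ↦
      S.f (b + s + S.t 0 x) (y + S.f 0 x (b + s)) (c + s + S.t 0 x)) 0) x = 0 := by
    rw [fwdDiff_iter_comm]
    simp only [S.fwdDiff_iter_f_comp_eq_zero hf, fwdDiff_iter_zero]
  have top : Δ^[j + 2] (fun x ↦ S.f 0 x (b + s)) x = 0 := by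
    rw [fwdDiff_iter_succ_apply, S.fwdDiff_iter_succ_f hf, S.fwdDiff_iter_succ_f hf, sub_self]
  simpa only [fwdDiff_iter_f_add, hf, S.leadingCoeff_f_translate hκ ht hj hf,
    fwdDiff_iter_add_apply, fwdDiff_iter_const_mul_apply, top, zero_add, mul_zero,
    add_assoc] using mixed

theorem leadingCoeff_f_eq_zero (a c : ZMod p) : φ a c = 0 := by
  have translate := S.leadingCoeff_f_translate hκ ht hj hf
  have diff_y (b x y : ZMod p) :
      Δ^[j + 1] (fun y ↦ S.f (a + S.t b y) (x + S.f b y a) (c + S.t b y)) y = 0 := by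
    have comm (y : ZMod p) : S.f (a + S.t b y) (x + S.f b y a) (c + S.t b y) =
        S.f (b + S.t a x) (y + S.f a x b) (c + S.t a x) + S.f a x c - S.f b y c := by
      linear_combination -S.f_comm a b c x y
    simp only [comm, fwdDiff_iter_sub_apply, fwdDiff_iter_add_apply,
      fwdDiff_iter_f_add, S.fwdDiff_iter_succ_f hf, translate,
      fwdDiff_iter_const _ j.succ_pos, add_zero, sub_self]
  have prod_eq_zero (b : ZMod p) : φ a c * φ b a = 0 := by
    have mixed : Δ^[j + 1] (fun y ↦ Δ^[j] (fun x ↦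
        S.f (a + S.t b y) (x + S.f b y a) (c + S.t b y)) 0) 0 = 0 := by
      rw [fwdDiff_iter_comm]
      simp only [diff_y, fwdDiff_iter_zero]
    simpa only [fwdDiff_iter_f_add, hf, zero_add, translate,
      S.subleadingCoeff_f_translate hκ ht hj hf, fwdDiff_iter_add_apply,
      fwdDiff_iter_const_mul_apply, S.fwdDiff_iter_succ_f hf, fwdDiff_iter_const _ j.succ_pos,
      add_zero] using mixed
  have square := prod_eq_zero (a + (a - c))
  rw [← translate a c (a - c), add_sub_cancel, ← pow_two] at square
  rw [← translate a c (a - c), add_sub_cancel, pow_eq_zero_iff two_ne_zero |>.mp square]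

end AffineDifference

theorem f_eq_f_zero (a x b : ZMod p) : S.f a x b = S.f a 0 b := by
  by_contra hx
  obtain ⟨j, e, ⟨⟨c, d⟩, hcd⟩, hj⟩ :=
    exists_fwdDiff_iter_succ_eq_const_of_family (f := fun (q : ZMod p × ZMod p) x ↦ S.f q.1 x q.2)
      ⟨(a, b), x, hx⟩
  have hjn : j < n := by
    by_contra! hnj
    exact hcd ((hj (c, d) 0).symm.trans (fwdDiff_iter_eq_zero_of_le 1 (Nat.succ_le_succ hnj)
      (S.fwdDiff_iter_f_eq_zero hκ ht c d) 0))
  exact hcd (S.leadingCoeff_f_eq_zero (φ := fun a b ↦ e (a, b)) hκ ht hjn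
    (fun a b ↦ fwdDiff_iter_eq_affine (hj (a, b))) c d)

theorem t_eq_t_zero (a x : ZMod p) : S.t a x = S.t 0 x := by
  refine S.eq_const_of_fwdDiff_iter_comp_t_eq_zero (g := fun a ↦ S.t a x) hκ ht le_rfl 0
    (fun b y ↦ ?_) a
  have h := S.fwdDiff_iter_t_comp_eq_zero ht 0 b y (x - S.f 0 0 b)
  simpa only [S.f_eq_f_zero hκ ht 0 _ b, sub_add_cancel] using h

theorem eq_zero_of_fwdDiff_iter_t_eq_mul (hI : C.Irretractable) : n = 0 := by
  by_contra hn
  have f_zero (a b : ZMod p) : S.f a 0 b = 0 := by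
    have comm (y : ZMod p) :
        S.t 0 (y + S.f a 0 b) - S.t 0 y = S.t 0 (0 + S.f b 0 a) - S.t 0 0 := by
      have h := S.t_comm a b 0 y
      simp only [S.t_eq_t_zero hκ ht, S.f_eq_f_zero hκ ht b y a] at h
      linear_combination h
    have diff := congrFun (congrArg (Δ^[n]) (funext comm)) 0
    simp only [fwdDiff_iter_sub_apply, fwdDiff_iter_comp_add, ht, zero_add, mul_zero, sub_zero,
      fwdDiff_iter_const _ (Nat.pos_of_ne_zero hn)] at diff
    exact (mul_eq_zero.mp diff).resolve_left hκ
  exact one_ne_zero (S.eq_of_irretractable hI (x := 0) (y := 0) (S.t_eq_t_zero hκ ht 1 0)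
    fun c ↦ (f_zero 1 c).trans (f_zero 0 c).symm).1

end LinearLeadingDifference

theorem exists_fwdDiff_iter_t_eq (hC : C.Indecomposable) (hI : C.Irretractable) :
    ∃ (n : ℕ) (κ : ZMod p), κ ≠ 0 ∧ ∀ a x, Δ^[n + 1] (S.t a) x = κ := by
  obtain ⟨d, E, ⟨b, hb⟩, hE⟩ := exists_fwdDiff_iter_eq_const (S.exists_t_ne_zero hC)
  have const (a : ZMod p) : E a = E b :=
    (S.eq_const_of_fwdDiff_iter_t_eq hE a).trans (S.eq_const_of_fwdDiff_iter_t_eq hE b).symm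
  cases d with
  | zero => exact (hb (S.eq_zero_of_t_eq_const hI fun a x ↦ (hE a x).trans (const a))).elim
  | succ n => exact ⟨n, E b, hb, fun a x ↦ (hE a x).trans (const a)⟩

theorem exists_skewChart_t_eq (hC : C.Indecomposable) (hI : C.Irretractable)
    (S : C.SkewChart (ZMod p)) : ∃ S' : C.SkewChart (ZMod p), ∀ a x, S'.t a x = x := by
  obtain ⟨n, κ, hκ, hS⟩ := S.exists_fwdDiff_iter_t_eq hC hI
  let S₁ := S.reparam (AddEquiv.refl _) fun a ↦ Δ^[n] (S.t a) 0 / κ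
  have shift (a : ZMod p) : S₁.t a = fun x ↦ S.t a (x + -(Δ^[n] (S.t a) 0 / κ)) := by
    simp [funext_iff, S₁, sub_eq_add_neg]
  have linear (a x : ZMod p) : Δ^[n] (S₁.t a) x = κ * x := by
    rw [shift, fwdDiff_iter_comp_add, fwdDiff_iter_eq_affine (hS a), mul_add, mul_neg,
      mul_div_cancel₀ _ hκ, neg_add_cancel_right]
  obtain rfl := S₁.eq_zero_of_fwdDiff_iter_t_eq_mul hκ linear hI
  let u := DistribMulAction.toAddEquiv₀ (ZMod p) κ hκ
  exact ⟨S₁.reparam u 0, fun a x ↦ (linear a _).trans <|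
    (u.apply_symm_apply _).trans (sub_zero x)⟩

end PrimeField

end SkewChart

section PrimeField

variable {p : ℕ} [Fact p.Prime]

theorem exists_skewChart {X : Type*} {C : CycleSet X} (hX : Nat.card X = p ^ 2)
    (hC : C.Indecomposable) (hG : IsPGroup p C.permGroup) :
    Nonempty (C.SkewChart (ZMod p)) := by
  have : Finite X := Nat.finite_of_card_ne_zero (hX ▸ pow_ne_zero 2 (NeZero.ne p))
  have : MulAction.IsPretransitive C.permGroup X := ⟨fun x y ↦
    let ⟨g, hg, hxy⟩ := hC x y
    ⟨⟨g, hg⟩, hxy⟩⟩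
  obtain ⟨e, t, f, he⟩ := exists_equiv_smul_eq_skewTranslation_zmod hG hX
  let σ (v : ZMod p × ZMod p) : C.permGroup :=
    ⟨C.sigma (e v), Subgroup.subset_closure ⟨e v, rfl⟩⟩
  exact ⟨⟨e, fun a x ↦ t (σ (a, x)), fun a x ↦ f (σ (a, x)), fun a x ↦ he (σ (a, x))⟩⟩

theorem exists_iso_ofEven {X : Type*} {C : CycleSet X} (hX : Nat.card X = p ^ 2)
    (hC : C.Indecomposable) (hI : C.Irretractable) (hG : IsPGroup p C.permGroup) :
    ∃ (Φ : ZMod p → ZMod p) (hΦ : Function.Even Φ), (∃ i j, Φ i ≠ Φ j) ∧ C.Iso (ofEven Φ hΦ) := by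
  obtain ⟨S⟩ := exists_skewChart hX hC hG
  obtain ⟨S', hS'⟩ := S.exists_skewChart_t_eq hC hI
  exact S'.exists_iso_ofEven hI hS'

variable {Φ : ZMod p → ZMod p} {i j : ZMod p}

theorem ofEven_indecomposable_of_ne (hΦ : Function.Even Φ) (hij : Φ i ≠ Φ j) :
    (ofEven Φ hΦ).Indecomposable := by
  obtain ⟨k, hk⟩ : ∃ k, Φ k ≠ 0 := by
    by_contra! h
    exact hij ((h i).trans (h j).symm)
  exact ofEven_indecomposable (zmod_addSubgroup_closure_eq_top ⟨k, rfl⟩ hk)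

theorem ofEven_irretractable_of_ne (hΦ : Function.Even Φ) (hij : Φ i ≠ Φ j) :
    (ofEven Φ hΦ).Irretractable :=
  ofEven_irretractable fun _ ↦ zmod_eq_zero_of_periodic hij

end PrimeField

end CycleSet

theorem stmt9_general {p : ℕ} (hp : p.Prime) :
    (∀ Φ : ZMod p → ZMod p, (∃ i j : ZMod p, Φ i ≠ Φ j) → (∀ A : ZMod p, Φ (-A) = Φ A) →
      ∃ C : CycleSet (ZMod p × ZMod p),
        (∀ a b x y : ZMod p, C.op (a, x) (b, y) = (b + x, y + Φ (b - a))) ∧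
        C.Indecomposable ∧ C.Irretractable ∧ IsPGroup p C.permGroup) ∧
    (∀ (X : Type*) (C : CycleSet X), Nat.card X = p ^ 2 →
      C.Indecomposable → C.Irretractable → IsPGroup p C.permGroup →
      ∃ Φ : ZMod p → ZMod p, (∃ i j : ZMod p, Φ i ≠ Φ j) ∧ (∀ A : ZMod p, Φ (-A) = Φ A) ∧
        ∃ D : CycleSet (ZMod p × ZMod p),
          (∀ a b x y : ZMod p, D.op (a, x) (b, y) = (b + x, y + Φ (b - a))) ∧
          C.Iso D) := by
  have : Fact p.Prime := ⟨hp⟩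
  constructor
  · rintro Φ ⟨i, j, hij⟩ hΦ
    exact ⟨.ofEven Φ hΦ, fun _ _ _ _ ↦ rfl, CycleSet.ofEven_indecomposable_of_ne hΦ hij,
      CycleSet.ofEven_irretractable_of_ne hΦ hij, CycleSet.ofEven_isPGroup_permGroup (by simp)⟩
  · intro X C hX hC hI hG
    obtain ⟨Φ, hΦ, hne, hiso⟩ := CycleSet.exists_iso_ofEven hX hC hI hG
    exact ⟨Φ, hne, hΦ, .ofEven Φ hΦ, fun _ _ _ _ ↦ rfl, hiso⟩

theorem stmt9 {p : ℕ} (hp : p.Prime) :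
    (∀ Φ : ZMod p → ZMod p, (∃ i j : ZMod p, Φ i ≠ Φ j) → (∀ A : ZMod p, Φ (-A) = Φ A) →
      ∃ C : CycleSet (ZMod p × ZMod p),
        (∀ a b x y : ZMod p, C.op (a, x) (b, y) = (b + x, y + Φ (b - a))) ∧
        C.Indecomposable ∧ C.Irretractable ∧ IsPGroup p C.permGroup) ∧
    (∀ (X : Type) (C : CycleSet X), Nat.card X = p ^ 2 →
      C.Indecomposable → C.Irretractable → IsPGroup p C.permGroup →
      ∃ Φ : ZMod p → ZMod p, (∃ i j : ZMod p, Φ i ≠ Φ j) ∧ (∀ A : ZMod p, Φ (-A) = Φ A) ∧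
        ∃ D : CycleSet (ZMod p × ZMod p),
          (∀ a b x y : ZMod p, D.op (a, x) (b, y) = (b + x, y + Φ (b - a))) ∧
          C.Iso D) :=
  stmt9_general hp
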